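/- Let R be a commutative ring and n a natural number. For x \in R, let M_n(x) be the 2^n \times 2^n matrix over R whose (j, k) entry (with 0 \le j, k \le 2^n - 1) equals x^{s(j-k)} if k \le j and s(k) + s(j-k) = s(j) (i.e., the pair (k, j-k) is carry-free), and equals 0 otherwise. Then for all x, y \in R, the matrix product satisfies M_n(x) \cdot M_n(y) = M_n(x + y); that is, the finite Sierpinski matrices form a one-parameter family additive under matrix multiplication. -/

import Mathlib

/-- `s k` is the sum of the binary digits of `k`. -/
def s (k : ℕ) : ℕ := (Nat.digits 2 k).sum

/-- The `2^n × 2^n` Sierpinski matrix `Mₙ(x)`: its `(j, k)` entry equals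
`x^{s(j-k)}` if `k ≤ j` and the pair `(k, j-k)` is carry-free
(i.e. `s(k) + s(j-k) = s(j)`), and equals `0` otherwise. -/
def sierpinskiMat {R : Type*} [CommRing R] (n : ℕ) (x : R) :
    Matrix (Fin (2 ^ n)) (Fin (2 ^ n)) R :=
  Matrix.of fun j k =>
    if (k : ℕ) ≤ (j : ℕ) ∧ s (k : ℕ) + s ((j : ℕ) - (k : ℕ)) = s (j : ℕ) then
      x ^ s ((j : ℕ) - (k : ℕ))
    else 0

/-!
By Kummer's theorem `s k + s (j - k) = s j + v₂ (j.choose k)`, so `(k, j - k)` is carry-free exactly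
when `j.choose k` is odd, which by Lucas' theorem means that the set of binary ones of `k` is
contained in that of `j`. If rows and columns are indexed by these sets instead of the numbers, the
`(C, A)` entry is therefore `x ^ #(C \ A)` for `A ⊆ C` and `0` otherwise. The product of two such
matrices sums `x ^ #(C \ B) * y ^ #(B \ A)` over `A ⊆ B ⊆ C`, which is the binomial expansion of
`(x + y) ^ #(C \ A)`. Since `B ⊆ C` bounds the number of `B` by that of `C`, cutting the matrices
off at any size, not only at a power of two, loses none of these terms.
-/

open Finset

section Digits

variable {p : ℕ} [hp : Fact p.Prime] {k n : ℕ}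

theorem sum_digits_add_sum_digits_sub (hkn : k ≤ n) :
    (p.digits k).sum + (p.digits (n - k)).sum =
      (p.digits n).sum + (p - 1) * padicValNat p (n.choose k) := by
  have legendre (m : ℕ) : (p - 1) * padicValNat p m.factorial + (p.digits m).sum = m := by
    rw [sub_one_mul_padicValNat_factorial, Nat.sub_add_cancel (Nat.digit_sum_le p m)]
  have valuation : padicValNat p n.factorial = padicValNat p (n.choose k) +
      padicValNat p k.factorial + padicValNat p (n - k).factorial := by
    rw [← Nat.choose_mul_factorial_mul_factorial hkn,
      padicValNat.mul (mul_ne_zero (Nat.choose_ne_zero hkn) k.factorial_ne_zero)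
        (n - k).factorial_ne_zero,
      padicValNat.mul (Nat.choose_ne_zero hkn) k.factorial_ne_zero]
  have hn := legendre n
  rw [valuation, mul_add, mul_add] at hn
  have hk := legendre k
  have hnk := legendre (n - k)
  lia

theorem sum_digits_add_sum_digits_sub_eq_iff_not_dvd_choose (hkn : k ≤ n) :
    (p.digits k).sum + (p.digits (n - k)).sum = (p.digits n).sum ↔ ¬ p ∣ n.choose k := by
  rw [sum_digits_add_sum_digits_sub hkn, Nat.add_eq_left, mul_eq_zero,
    or_iff_right (Nat.sub_ne_zero_of_lt hp.out.one_lt), padicValNat.eq_zero_iff]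
  simp [hp.out.ne_one, Nat.choose_ne_zero hkn]

theorem not_dvd_choose_iff_le_of_lt (hn : n < p) : ¬ p ∣ n.choose k ↔ k ≤ n := by
  refine ⟨fun h ↦ ?_, fun hkn h ↦ ?_⟩
  · by_contra! hnk
    simp [Nat.choose_eq_zero_of_lt hnk] at h
  · have h_dvd : p ∣ n.factorial := by
      rw [← Nat.choose_mul_factorial_mul_factorial hkn, mul_assoc]
      exact h.mul_right _
    exact hn.not_ge (hp.out.dvd_factorial.1 h_dvd)

theorem not_dvd_choose_iff_forall_digit_le :
    ¬ p ∣ n.choose k ↔ ∀ i, k / p ^ i % p ≤ n / p ^ i % p := by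
  have digit_lt (i : ℕ) : n / p ^ i % p < p := Nat.mod_lt _ hp.out.pos
  have lt_pow {m i : ℕ} (h : m ≤ i) : m < p ^ i :=
    h.trans_lt (Nat.lt_pow_self hp.out.one_lt)
  rw [(Choose.choose_modEq_prod_range_choose_nat (lt_pow (le_max_left n k))
    (lt_pow (le_max_right n k))).dvd_iff dvd_rfl, hp.out.prime.dvd_finsetProd_iff]
  simp only [not_exists, not_and, mem_range, not_dvd_choose_iff_le_of_lt (digit_lt _)]
  refine forall_congr' fun i ↦ ⟨fun h ↦ ?_, fun h _ ↦ h⟩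
  by_cases hi : i < max n k
  · exact h hi
  · simp [Nat.div_eq_of_lt (lt_pow ((le_max_right n k).trans (not_lt.1 hi)))]

end Digits

section BinaryOnes

theorem s_eq_card_bitIndices (k : ℕ) : s k = #(equivBitIndices k) := by
  rw [equivBitIndices_apply, List.toFinset_card_of_nodup Nat.bitIndices_nodup, s]
  induction k using Nat.evenOddRec with
  | h0 => simp
  | h_even k ih =>
    rcases k.eq_zero_or_pos with rfl | hk
    · simp
    · simpa [Nat.digits_base_mul one_lt_two hk] using ih
  | h_odd k ih =>
    simpa [Nat.digits_add_two_add_one, Nat.mul_add_div, add_comm 1] using ih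

variable {j k : ℕ}

theorem bitIndices_subset_iff_forall_digit_le :
    equivBitIndices k ⊆ equivBitIndices j ↔ ∀ i, k / 2 ^ i % 2 ≤ j / 2 ^ i % 2 := by
  simp only [subset_iff, equivBitIndices_apply, List.mem_toFinset, Nat.mem_bitIndices,
    Nat.testBit_eq_decide_div_mod_eq, decide_eq_true_eq]
  exact forall_congr' fun i ↦ by lia

theorem le_of_bitIndices_subset (h : equivBitIndices k ⊆ equivBitIndices j) : k ≤ j := by
  rw [← equivBitIndices.symm_apply_apply k, ← equivBitIndices.symm_apply_apply j]
  exact sum_le_sum_of_subset h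

theorem le_and_s_add_s_sub_eq_iff_bitIndices_subset :
    k ≤ j ∧ s k + s (j - k) = s j ↔ equivBitIndices k ⊆ equivBitIndices j := by
  rw [← and_iff_right_of_imp (le_of_bitIndices_subset (j := j) (k := k))]
  refine and_congr_right fun hkj ↦ ?_
  rw [s, s, s, sum_digits_add_sum_digits_sub_eq_iff_not_dvd_choose hkj,
    not_dvd_choose_iff_forall_digit_le, bitIndices_subset_iff_forall_digit_le]

theorem s_sub_eq_card_sdiff (h : equivBitIndices k ⊆ equivBitIndices j) :
    s (j - k) = #(equivBitIndices j \ equivBitIndices k) := by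
  have hs := (le_and_s_add_s_sub_eq_iff_bitIndices_subset.2 h).2
  rw [card_sdiff_of_subset h, ← s_eq_card_bitIndices, ← s_eq_card_bitIndices]
  lia

theorem sum_fin_ite_bitIndices_mem {M : Type*} [AddCommMonoid M] {N : ℕ} {S : Finset (Finset ℕ)}
    (hS : ∀ B ∈ S, equivBitIndices.symm B < N) (f : Finset ℕ → M) :
    (∑ m : Fin N, if equivBitIndices (m : ℕ) ∈ S then f (equivBitIndices (m : ℕ)) else 0) =
      ∑ B ∈ S, f B := by
  rw [← sum_filter]
  refine sum_bij' (fun m _ ↦ equivBitIndices (m : ℕ))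
    (fun B hB ↦ ⟨equivBitIndices.symm B, hS B hB⟩) ?_ ?_ ?_ ?_ fun _ _ ↦ rfl
  all_goals simp [-equivBitIndices_apply, -equivBitIndices_symm_apply]

end BinaryOnes

section Binomial

variable {ι R : Type*} [Semiring R] {x y : R}

theorem sum_powerset_pow_mul_pow_of_commute (h : Commute x y) (t : Finset ι) :
    ∑ u ∈ t.powerset, x ^ #u * y ^ (#t - #u) = (x + y) ^ #t := by
  rw [sum_powerset_apply_card (fun m ↦ x ^ m * y ^ (#t - m)), h.add_pow]
  simp only [nsmul_eq_mul, Nat.cast_comm]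

theorem sum_Icc_pow_card_sdiff_mul_pow_card_sdiff [DecidableEq ι] (h : Commute x y)
    {A C : Finset ι} (hAC : A ⊆ C) :
    ∑ B ∈ Icc A C, x ^ #(C \ B) * y ^ #(B \ A) = (x + y) ^ #(C \ A) := by
  rw [← sum_powerset_pow_mul_pow_of_commute h]
  refine sum_nbij' (C \ ·) (C \ ·) ?_ ?_ ?_ ?_ ?_
  all_goals simp only [mem_Icc, mem_powerset]
  · exact fun B hB ↦ sdiff_subset_sdiff Subset.rfl hB.1
  · exact fun U hU ↦ ⟨subset_sdiff.2 ⟨hAC, (subset_sdiff.1 hU).2.symm⟩, sdiff_subset⟩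
  · exact fun B hB ↦ Finset.sdiff_sdiff_eq_self hB.2
  · exact fun U hU ↦ Finset.sdiff_sdiff_eq_self (hU.trans sdiff_subset)
  · rintro B ⟨hAB, hBC⟩
    rw [← card_sdiff_of_subset (sdiff_subset_sdiff Subset.rfl hAB),
      sdiff_sdiff_sdiff_cancel_left hBC]

end Binomial

section Truncation

variable {R : Type*} [Semiring R]

/-- The leading `N × N` block of the infinite Sierpinski matrix over a semiring, so that
`sierpinskiMat n` is the case `N = 2 ^ n`. -/
def sierpinskiTruncation (N : ℕ) (x : R) : Matrix (Fin N) (Fin N) R :=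
  Matrix.of fun j k =>
    if (k : ℕ) ≤ (j : ℕ) ∧ s (k : ℕ) + s ((j : ℕ) - (k : ℕ)) = s (j : ℕ) then
      x ^ s ((j : ℕ) - (k : ℕ))
    else 0

theorem sierpinskiTruncation_apply {N : ℕ} (x : R) (j k : Fin N) :
    sierpinskiTruncation N x j k =
      if equivBitIndices k ⊆ equivBitIndices j then
        x ^ #(equivBitIndices (j : ℕ) \ equivBitIndices (k : ℕ))
      else 0 := by
  simp only [sierpinskiTruncation, Matrix.of_apply, le_and_s_add_s_sub_eq_iff_bitIndices_subset]
  split_ifs with h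
  · rw [s_sub_eq_card_sdiff h]
  · rfl

theorem sierpinskiMat_mul_general (N : ℕ) {x y : R} (h : Commute x y) :
    sierpinskiTruncation N x * sierpinskiTruncation N y = sierpinskiTruncation N (x + y) := by
  ext j k
  set A := equivBitIndices (k : ℕ) with hA
  set C := equivBitIndices (j : ℕ) with hC
  have lt_of_mem_Icc (B : Finset ℕ) (hB : B ∈ Icc A C) : equivBitIndices.symm B < N :=
    (le_of_bitIndices_subset (by simpa [hC] using (mem_Icc.1 hB).2)).trans_lt j.isLt
  calc (sierpinskiTruncation N x * sierpinskiTruncation N y) j k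
    _ = ∑ m : Fin N, if equivBitIndices (m : ℕ) ∈ Icc A C then
          x ^ #(C \ equivBitIndices (m : ℕ)) * y ^ #(equivBitIndices (m : ℕ) \ A) else 0 := by
      simp only [Matrix.mul_apply, sierpinskiTruncation_apply, ite_zero_mul_ite_zero, mem_Icc,
        and_comm, hA, hC]
    _ = ∑ B ∈ Icc A C, x ^ #(C \ B) * y ^ #(B \ A) :=
      sum_fin_ite_bitIndices_mem lt_of_mem_Icc fun B ↦ x ^ #(C \ B) * y ^ #(B \ A)
    _ = sierpinskiTruncation N (x + y) j k := by
      rw [sierpinskiTruncation_apply]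
      split_ifs with hAC
      · exact sum_Icc_pow_card_sdiff_mul_pow_card_sdiff h hAC
      · rw [Icc_eq_empty hAC, sum_empty]

end Truncation

/-- The finite Sierpinski matrices form a one-parameter family additive under
matrix multiplication: `Mₙ(x) * Mₙ(y) = Mₙ(x + y)`. -/
theorem sierpinskiMat_mul {R : Type*} [CommRing R] (n : ℕ) (x y : R) :
    sierpinskiMat n x * sierpinskiMat n y = sierpinskiMat n (x + y) :=
  sierpinskiMat_mul_general (2 ^ n) (Commute.all x y)
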